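/- Let F₁, F₂ : ℂ⁺ → ℂ⁺ be analytic functions, neither a conformal automorphism of ℂ⁺, with lim_{y→+∞} F_j(iy)/(iy) = 1 for j = 1,2, and let ω be the unique analytic self-map of ℂ⁺ satisfying F₂(F₁(ω(z)) − ω(z) + z) − (F₁(ω(z)) − ω(z)) = ω(z) for all z ∈ ℂ⁺. Fix a ∈ ℝ and define u_j(w) = F_j(w) − w + a for w ∈ ℂ⁺, j = 1,2, and assume that u₂ ∘ u₁ is not a conformal automorphism of ℂ⁺. If the cluster set C(ω, a) intersects ℂ⁺, then ω extends analytically to a neighborhood of a in ℂ. -/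

import Mathlib

open Complex Filter Set Topology

/-- The open upper half-plane `ℂ⁺ = {z : ℂ | Im z > 0}`. -/
def UHP : Set ℂ := {z : ℂ | 0 < z.im}

/-!
For `z ∈ ℂ⁺` the equation says that `ω z` is a fixed point of `u₂ ∘ u₁`, where
`u_j(w) = F_j(w) - w + z`. Schwarz–Pick and the normalization at `i∞` give `Im F_j(w) ≥ Im w`, so
by continuity, for `z = a`, any cluster value `L ∈ ℂ⁺` of `ω` is an interior fixed point of the
self-map `u₂ ∘ u₁` of `ℂ⁺`. By the Schwarz lemma the derivative there can equal `1` only if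
`u₂ ∘ u₁` is the identity. Otherwise the implicit function theorem solves the fixed point equation
near `(a, L)` by an analytic `g`; since the graph of `ω` accumulates at `(a, L)`, `ω` agrees with
`g` on some open subset of a half-disc at `a`, hence on the whole half-disc.
-/

open scoped ComplexConjugate

lemma mem_UHP {z : ℂ} : z ∈ UHP ↔ 0 < z.im := Iff.rfl

lemma isOpen_UHP : IsOpen UHP := isOpen_lt continuous_const continuous_im

lemma convex_UHP : Convex ℝ UHP := convex_halfSpace_im_gt 0

lemma bijOn_add_const_UHP {c : ℂ} (hc : c.im = 0) : BijOn (· + c) UHP UHP :=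
  ⟨fun z hz => by simpa [mem_UHP, hc] using hz, (add_left_injective c).injOn,
    fun z hz => ⟨z - c, by simpa [mem_UHP, hc] using hz, sub_add_cancel z c⟩⟩

/-- The Cayley transform of `ℂ⁺` onto the unit disc that sends `p` to `0`. -/
noncomputable def cayley (p w : ℂ) : ℂ := (w - p) / (w - conj p)

/-- The inverse of `cayley p`, mapping the unit disc onto `ℂ⁺` and `0` to `p`. -/
noncomputable def cayleyInv (p ζ : ℂ) : ℂ := (p - conj p * ζ) / (1 - ζ)

@[simp] lemma cayley_self (p : ℂ) : cayley p p = 0 := by simp [cayley]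

@[simp] lemma cayleyInv_zero (p : ℂ) : cayleyInv p 0 = p := by simp [cayleyInv]

lemma sub_conj_ne_zero {p w : ℂ} (hp : p ∈ UHP) (hw : w ∈ UHP) : w - conj p ≠ 0 := by
  refine ne_of_apply_ne im ?_
  rw [mem_UHP] at hp hw
  simp only [sub_im, conj_im, sub_neg_eq_add, zero_im]
  positivity

lemma one_sub_ne_zero_of_norm_lt_one {ζ : ℂ} (hζ : ‖ζ‖ < 1) : 1 - ζ ≠ 0 :=
  sub_ne_zero.2 fun h => by simp [← h] at hζ

lemma norm_sub_conj_sq (p w : ℂ) : ‖w - conj p‖ ^ 2 = ‖w - p‖ ^ 2 + 4 * (w.im * p.im) := by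
  simp only [← normSq_eq_norm_sq, normSq_apply, sub_re, sub_im, conj_re, conj_im]
  ring

lemma norm_cayley_lt_one {p w : ℂ} (hp : p ∈ UHP) (hw : w ∈ UHP) : ‖cayley p w‖ < 1 := by
  rw [cayley, norm_div, div_lt_one (norm_pos_iff.2 (sub_conj_ne_zero hp hw)),
    ← sq_lt_sq₀ (norm_nonneg _) (norm_nonneg _), norm_sub_conj_sq]
  linarith [mul_pos (mem_UHP.1 hw) (mem_UHP.1 hp)]

lemma im_cayleyInv (p : ℂ) {ζ : ℂ} (hζ : ‖ζ‖ < 1) :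
    (cayleyInv p ζ).im = p.im * (1 - ‖ζ‖ ^ 2) / ‖1 - ζ‖ ^ 2 := by
  have hne : normSq (1 - ζ) ≠ 0 := normSq_eq_zero.not.2 (one_sub_ne_zero_of_norm_lt_one hζ)
  simp only [← normSq_eq_norm_sq, cayleyInv, div_im]
  field_simp
  simp only [sub_im, sub_re, mul_im, mul_re, conj_re, conj_im, one_re, one_im, normSq_apply]
  ring

lemma cayleyInv_mem_UHP {p ζ : ℂ} (hp : p ∈ UHP) (hζ : ‖ζ‖ < 1) : cayleyInv p ζ ∈ UHP := by
  rw [mem_UHP, im_cayleyInv p hζ]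
  have hden : 0 < ‖1 - ζ‖ := norm_pos_iff.2 (one_sub_ne_zero_of_norm_lt_one hζ)
  have hnum : 0 < 1 - ‖ζ‖ ^ 2 := sub_pos.2 (pow_lt_one₀ (norm_nonneg ζ) hζ two_ne_zero)
  rw [mem_UHP] at hp
  positivity

lemma leftInvOn_cayleyInv_cayley {p : ℂ} (hp : p ∈ UHP) :
    LeftInvOn (cayleyInv p) (cayley p) UHP := fun w hw => by
  have hconj := sub_conj_ne_zero hp hw
  rw [cayleyInv, div_eq_iff (one_sub_ne_zero_of_norm_lt_one (norm_cayley_lt_one hp hw)), cayley]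
  field_simp
  ring

lemma differentiableOn_cayley {p : ℂ} (hp : p ∈ UHP) : DifferentiableOn ℂ (cayley p) UHP :=
  (differentiableOn_id.sub_const p).fun_div (differentiableOn_id.sub_const (conj p))
    fun _ hw => sub_conj_ne_zero hp hw

lemma differentiableOn_cayleyInv (p : ℂ) :
    DifferentiableOn ℂ (cayleyInv p) (Metric.ball 0 1) :=
  DifferentiableOn.fun_div (by fun_prop) (by fun_prop)
    fun _ hζ => one_sub_ne_zero_of_norm_lt_one (mem_ball_zero_iff.1 hζ)

lemma hasDerivAt_cayley_self {p : ℂ} (hp : p ∈ UHP) :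
    HasDerivAt (cayley p) (p - conj p)⁻¹ p := by
  have hne := sub_conj_ne_zero hp hp
  refine (((hasDerivAt_id p).sub_const p).fun_div
    ((hasDerivAt_id p).sub_const (conj p)) hne).congr_deriv ?_
  simp only [id_eq]
  field_simp
  ring

lemma hasDerivAt_cayleyInv_zero (p : ℂ) : HasDerivAt (cayleyInv p) (p - conj p) 0 := by
  refine ((((hasDerivAt_id (0 : ℂ)).const_mul (conj p)).const_sub p).fun_div
    ((hasDerivAt_id (0 : ℂ)).const_sub 1) (by simp)).congr_deriv ?_
  simp only [id_eq]
  ring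

/-- The self-map `F` of `ℂ⁺` read as a self-map of the unit disc fixing `0`, through the Cayley
transforms centred at `p` and `F p`. -/
noncomputable def cayleyConj (F : ℂ → ℂ) (p : ℂ) : ℂ → ℂ := cayley (F p) ∘ F ∘ cayleyInv p

section SchwarzPick

variable {F : ℂ → ℂ} {p v w : ℂ}

lemma cayleyConj_zero (F : ℂ → ℂ) (p : ℂ) : cayleyConj F p 0 = 0 := by simp [cayleyConj]

lemma cayleyConj_cayley (F : ℂ → ℂ) (hp : p ∈ UHP) (hw : w ∈ UHP) :
    cayleyConj F p (cayley p w) = cayley (F p) (F w) := by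
  simp only [cayleyConj, Function.comp_apply, leftInvOn_cayleyInv_cayley hp hw]

lemma mapsTo_cayleyConj (hm : MapsTo F UHP UHP) (hp : p ∈ UHP) :
    MapsTo (cayleyConj F p) (Metric.ball 0 1) (Metric.closedBall 0 1) := fun _ hζ =>
  mem_closedBall_zero_iff.2
    (norm_cayley_lt_one (hm hp) (hm (cayleyInv_mem_UHP hp (mem_ball_zero_iff.1 hζ)))).le

lemma differentiableOn_cayleyConj (hd : DifferentiableOn ℂ F UHP) (hm : MapsTo F UHP UHP)
    (hp : p ∈ UHP) : DifferentiableOn ℂ (cayleyConj F p) (Metric.ball 0 1) :=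
  have hInv : MapsTo (cayleyInv p) (Metric.ball 0 1) UHP := fun _ hζ =>
    cayleyInv_mem_UHP hp (mem_ball_zero_iff.1 hζ)
  (differentiableOn_cayley (hm hp)).comp (hd.comp (differentiableOn_cayleyInv p) hInv)
    (hm.comp hInv)

lemma hasDerivAt_cayleyConj_zero {d : ℂ} (hp : p ∈ UHP) (hfix : F p = p)
    (hF : HasDerivAt F d p) : HasDerivAt (cayleyConj F p) d 0 := by
  have hF' : HasDerivAt F d (cayleyInv p 0) := by rwa [cayleyInv_zero]
  have hcay : HasDerivAt (cayley (F p)) (p - conj p)⁻¹ ((F ∘ cayleyInv p) 0) := by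
    simpa [hfix] using hasDerivAt_cayley_self hp
  refine (hcay.comp 0 (hF'.comp 0 (hasDerivAt_cayleyInv_zero p))).congr_deriv ?_
  field_simp [sub_conj_ne_zero hp hp]

lemma norm_cayley_le_norm_cayley (hd : DifferentiableOn ℂ F UHP) (hm : MapsTo F UHP UHP)
    (hv : v ∈ UHP) (hw : w ∈ UHP) : ‖cayley (F v) (F w)‖ ≤ ‖cayley v w‖ := by
  rw [← cayleyConj_cayley F hv hw]
  exact norm_le_norm_of_mapsTo_ball (differentiableOn_cayleyConj hd hm hv)
    (mapsTo_cayleyConj hm hv) (cayleyConj_zero F v) (norm_cayley_lt_one hv hw)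

lemma norm_sub_sq_mul_im_le (hd : DifferentiableOn ℂ F UHP) (hm : MapsTo F UHP UHP)
    (hv : v ∈ UHP) (hw : w ∈ UHP) :
    ‖F w - F v‖ ^ 2 * (w.im * v.im) ≤ ‖w - v‖ ^ 2 * ((F w).im * (F v).im) := by
  have hpick := norm_cayley_le_norm_cayley hd hm hv hw
  rw [cayley, cayley, norm_div, norm_div, div_le_div_iff₀
    (norm_pos_iff.2 (sub_conj_ne_zero (hm hv) (hm hw)))
    (norm_pos_iff.2 (sub_conj_ne_zero hv hw))] at hpick
  have hsq := pow_le_pow_left₀ (by positivity) hpick 2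
  simp only [mul_pow, norm_sub_conj_sq] at hsq
  linarith

lemma eqOn_id_of_deriv_eq_one (hd : DifferentiableOn ℂ F UHP) (hm : MapsTo F UHP UHP)
    (hp : p ∈ UHP) (hfix : F p = p) (hderiv : deriv F p = 1) : EqOn F id UHP := by
  have hF : HasDerivAt F 1 p :=
    hderiv ▸ (hd.differentiableAt (isOpen_UHP.mem_nhds hp)).hasDerivAt
  have hslope : dslope (cayleyConj F p) 0 0 = 1 := by
    rw [dslope_same, (hasDerivAt_cayleyConj_zero hp hfix hF).deriv]
  have hball : EqOn (cayleyConj F p) id (Metric.ball 0 1) := by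
    simpa only [cayleyConj_zero, hslope, zero_add, sub_zero, smul_eq_mul, mul_one] using!
      affine_of_mapsTo_ball_of_norm_dslope_eq_div
      (differentiableOn_cayleyConj hd hm hp) (R₂ := 1)
      (by simpa only [cayleyConj_zero] using mapsTo_cayleyConj hm hp)
      (Metric.mem_ball_self one_pos) (by rw [hslope, norm_one, div_one])
  intro w hw
  apply (leftInvOn_cayleyInv_cayley hp).injOn (hm hw) hw
  have hcay := hball (mem_ball_zero_iff.2 (norm_cayley_lt_one hp hw))
  rwa [cayleyConj_cayley F hp hw, hfix] at hcay

/-- Schwarz–Pick for the points `w` and `iy`, divided by `y ^ 3` so that every factor converges as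
`y → ∞`. -/
lemma norm_sub_div_sq_mul_im_le (hd : DifferentiableOn ℂ F UHP) (hm : MapsTo F UHP UHP)
    (hw : w ∈ UHP) {y : ℝ} (hy : 0 < y) :
    ‖F w * (I * y)⁻¹ - F (I * y) / (I * y)‖ ^ 2 * w.im ≤
      ‖w * (I * y)⁻¹ - 1‖ ^ 2 * ((F w).im * (F (I * y) / (I * y)).re) := by
  have hyI : I * (y : ℂ) ≠ 0 := mul_ne_zero I_ne_zero (ofReal_ne_zero.2 hy.ne')
  have hpick := norm_sub_sq_mul_im_le hd hm (v := I * y) (by simpa [mem_UHP] using hy) hw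
  have hnorm : ‖I * (y : ℂ)‖ = y := by simp [abs_of_pos hy]
  have hre : (F (I * y) / (I * y)).re = (F (I * y)).im / y := by
    rw [mul_comm I, ← div_div, div_right_comm]
    simp
  have hone : (1 : ℂ) = I * y / (I * y) := (div_self hyI).symm
  rw [hre, hone, ← div_eq_mul_inv, ← div_eq_mul_inv, ← sub_div, ← sub_div, norm_div, norm_div,
    hnorm, div_pow, div_pow]
  rw [show (I * (y : ℂ)).im = y by simp] at hpick
  calc _ = ‖F w - F (I * y)‖ ^ 2 * (w.im * y) / y ^ 3 := by field_simp
    _ ≤ ‖w - I * y‖ ^ 2 * ((F w).im * (F (I * y)).im) / y ^ 3 := by gcongr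
    _ = _ := by field_simp

lemma mul_im_le_im_of_tendsto_div {c : ℝ} (hd : DifferentiableOn ℂ F UHP)
    (hm : MapsTo F UHP UHP)
    (hl : Tendsto (fun y : ℝ => F (I * y) / (I * y)) atTop (𝓝 (c : ℂ))) (hw : w ∈ UHP) :
    c * w.im ≤ (F w).im := by
  rcases le_or_gt c 0 with hc | hc
  · exact (mul_nonpos_of_nonpos_of_nonneg hc (mem_UHP.1 hw).le).trans (mem_UHP.1 (hm hw)).le
  have hinv : Tendsto (fun y : ℝ => (I * (y : ℂ))⁻¹) atTop (𝓝 0) := by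
    simpa [mul_inv] using
      (tendsto_inv₀_cobounded.comp (RCLike.tendsto_ofReal_atTop_cobounded ℂ)).mul_const I⁻¹
  have hlim := le_of_tendsto_of_tendsto
    (((((hinv.const_mul (F w)).sub hl).norm).pow 2).mul_const w.im)
    (((((hinv.const_mul w).sub_const 1).norm).pow 2).mul
      (((continuous_re.tendsto _).comp hl).const_mul (F w).im))
    ((eventually_gt_atTop 0).mono fun y hy => norm_sub_div_sq_mul_im_le hd hm hw hy)
  have hlim' : c ^ 2 * w.im ≤ (F w).im * c := by simpa using hlim
  exact le_of_mul_le_mul_left (by linear_combination hlim') hc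

lemma im_le_im_of_tendsto_div (hd : DifferentiableOn ℂ F UHP) (hm : MapsTo F UHP UHP)
    (hl : Tendsto (fun y : ℝ => F (I * y) / (I * y)) atTop (𝓝 1)) (hw : w ∈ UHP) :
    w.im ≤ (F w).im := by
  simpa using mul_im_le_im_of_tendsto_div (c := 1) hd hm (by simpa using hl) hw

end SchwarzPick

lemma exists_const_or_mapsTo_UHP {g : ℂ → ℂ} {U : Set ℂ} (hg : DifferentiableOn ℂ g U)
    (hUo : IsOpen U) (hUc : IsPreconnected U) (him : ∀ z ∈ U, 0 ≤ (g z).im) :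
    (∃ c, ∀ z ∈ U, g z = c) ∨ MapsTo g U UHP := by
  refine ((hg.analyticOnNhd hUo).is_constant_or_isOpen hUc).imp_right fun hopen => ?_
  have himage : g '' U ⊆ interior {z | 0 ≤ z.im} :=
    interior_maximal (image_subset_iff.2 him) (hopen U subset_rfl hUo)
  rwa [interior_setOfPred_le_im, image_subset_iff] at himage

lemma mapsTo_UHP_of_im_nonneg {g : ℂ → ℂ} {U : Set ℂ} {z₀ : ℂ} (hg : DifferentiableOn ℂ g U)
    (hUo : IsOpen U) (hUc : IsPreconnected U) (him : ∀ z ∈ U, 0 ≤ (g z).im) (hz₀ : z₀ ∈ U)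
    (hgz₀ : g z₀ ∈ UHP) : MapsTo g U UHP := by
  rcases exists_const_or_mapsTo_UHP hg hUo hUc him with ⟨c, hc⟩ | hmaps
  · exact fun z hz => by rwa [hc z hz, ← hc z₀ hz₀]
  · exact hmaps

lemma im_lt_im_of_not_bijOn {F : ℂ → ℂ} (hd : DifferentiableOn ℂ F UHP)
    (him : ∀ w ∈ UHP, w.im ≤ (F w).im) (hna : ¬ BijOn F UHP UHP) {w : ℂ} (hw : w ∈ UHP) :
    w.im < (F w).im := by
  have hd_sub : DifferentiableOn ℂ (fun z => F z - z) UHP := hd.sub differentiableOn_id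
  have him_sub : ∀ z ∈ UHP, 0 ≤ (F z - z).im := fun z hz => by simpa using him z hz
  rcases exists_const_or_mapsTo_UHP hd_sub isOpen_UHP convex_UHP.isPreconnected him_sub with
    ⟨c, hc⟩ | hpos
  · have hF : EqOn (· + c) F UHP := fun z hz => by simp [← hc z hz]
    refine (him w hw).lt_of_ne fun heq => hna ((bijOn_add_const_UHP ?_).congr hF)
    rw [← hc w hw, sub_im, heq, sub_self]
  · simpa [mem_UHP] using hpos hw

section Continuation

variable {E : Type*} [NormedAddCommGroup E] [NormedSpace ℂ E] [CompleteSpace E]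
  {ω : ℂ → E} {D : Set ℂ} {a : ℂ} {L : E}

/-- Here and below, `(a, L) ∈ closure (D.graphOn ω)` encodes that `L` is a cluster value of `ω` at
the boundary point `a`. -/
lemma eqOn_inter_of_eventually_graphOn {g : ℂ → E} {U : Set ℂ} (hDo : IsOpen D)
    (hDc : Convex ℝ D) (hω : DifferentiableOn ℂ ω D) (hUo : IsOpen U) (hUc : Convex ℝ U)
    (hg : DifferentiableOn ℂ g U) (ha : a ∈ U) (hcluster : (a, L) ∈ closure (D.graphOn ω))
    (heq : ∀ᶠ p in 𝓝[D.graphOn ω] (a, L), g p.1 = p.2) : EqOn ω g (U ∩ D) := by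
  have := mem_closure_iff_nhdsWithin_neBot.1 hcluster
  have hU : ∀ᶠ p in 𝓝[D.graphOn ω] (a, L), p.1 ∈ U :=
    nhdsWithin_le_nhds (continuous_fst.continuousAt (hUo.mem_nhds ha))
  obtain ⟨_, ⟨hnear, hz₀U⟩, z₀, hz₀, rfl⟩ :=
    ((eventually_eventually_nhdsWithin.2 heq).and hU).and self_mem_nhdsWithin |>.exists
  have hgraph : Tendsto (fun z => (z, ω z)) (𝓝 z₀) (𝓝[D.graphOn ω] (z₀, ω z₀)) :=
    tendsto_nhdsWithin_iff.2
      ⟨tendsto_id.prodMk_nhds (hω.continuousOn.continuousAt (hDo.mem_nhds hz₀)),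
        eventually_of_mem (hDo.mem_nhds hz₀) fun z hz => mem_image_of_mem _ hz⟩
  exact AnalyticOnNhd.eqOn_of_preconnected_of_eventuallyEq
    ((hω.mono inter_subset_right).analyticOnNhd (hUo.inter hDo))
    ((hg.mono inter_subset_left).analyticOnNhd (hUo.inter hDo))
    (hUc.inter hDc).isPreconnected ⟨hz₀U, hz₀⟩
    ((hgraph.eventually hnear).mono fun _ => Eq.symm)

lemma exists_differentiableOn_eqOn_of_implicit {F : Type*} [NormedAddCommGroup F]
    [NormedSpace ℂ F] [CompleteSpace F] {Φ : ℂ × E → F} {c : F} (hDo : IsOpen D)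
    (hDc : Convex ℝ D) (hω : DifferentiableOn ℂ ω D)
    (hcluster : (a, L) ∈ closure (D.graphOn ω)) (hΦ : ContDiffAt ℂ 1 Φ (a, L))
    (hinv : (fderiv ℂ Φ (a, L) ∘L .inr ℂ ℂ E).IsInvertible)
    (hΦω : ∀ᶠ p in 𝓝[D.graphOn ω] (a, L), Φ p = c) :
    ∃ (U : Set ℂ) (g : ℂ → E), IsOpen U ∧ a ∈ U ∧ DifferentiableOn ℂ g U ∧
      EqOn ω g (U ∩ D) := by
  have := mem_closure_iff_nhdsWithin_neBot.1 hcluster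
  have hΦ_base : Φ (a, L) = c := tendsto_nhds_unique_of_eventuallyEq
    (hΦ.continuousAt.mono_left nhdsWithin_le_nhds) tendsto_const_nhds hΦω
  let g := hΦ.implicitFunction one_ne_zero hinv
  have hg_graph : ∀ᶠ p in 𝓝[D.graphOn ω] (a, L), g p.1 = p.2 := by
    filter_upwards [hΦω, nhdsWithin_le_nhds
      (hΦ.eventually_apply_eq_iff_implicitFunction one_ne_zero hinv)] with p hp hiff
    exact hiff.1 (hp.trans hΦ_base.symm)
  have hg_diff : ∀ᶠ z in 𝓝 a, DifferentiableAt ℂ g z :=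
    ((hΦ.contDiffAt_implicitFunction one_ne_zero hinv).eventually (by simp)).mono
      fun _ hz => hz.differentiableAt one_ne_zero
  obtain ⟨r, hr, hball⟩ := Metric.eventually_nhds_iff_ball.1 hg_diff
  have hg : DifferentiableOn ℂ g (Metric.ball a r) :=
    fun z hz => (hball z hz).differentiableWithinAt
  have ha := Metric.mem_ball_self (x := a) hr
  exact ⟨Metric.ball a r, g, Metric.isOpen_ball, ha, hg,
    eqOn_inter_of_eventually_graphOn hDo hDc hω Metric.isOpen_ball (convex_ball a r) hg ha
      hcluster hg_graph⟩

end Continuation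

lemma isInvertible_of_apply_one_ne_zero {𝕜 : Type*} [NontriviallyNormedField 𝕜]
    {A : 𝕜 →L[𝕜] 𝕜} (hA : A 1 ≠ 0) : A.IsInvertible :=
  ⟨ContinuousLinearEquiv.unitsEquivAut 𝕜 (Units.mk0 _ hA), by ext; simp⟩

lemma exists_differentiableOn_eqOn_of_fixedPoint {ω : ℂ → ℂ} {D : Set ℂ} {a L : ℂ}
    {G : ℂ × ℂ → ℂ} (hDo : IsOpen D) (hDc : Convex ℝ D) (hω : DifferentiableOn ℂ ω D)
    (hcluster : (a, L) ∈ closure (D.graphOn ω)) (hG : ContDiffAt ℂ 1 G (a, L))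
    (hderiv : deriv (fun w => G (a, w)) L ≠ 1)
    (hfix : ∀ᶠ p in 𝓝[D.graphOn ω] (a, L), G p = p.2) :
    ∃ (U : Set ℂ) (g : ℂ → ℂ), IsOpen U ∧ a ∈ U ∧ DifferentiableOn ℂ g U ∧
      EqOn ω g (U ∩ D) := by
  have hΦ : ContDiffAt ℂ 1 (fun p => G p - p.2) (a, L) := hG.sub contDiffAt_snd
  have hpartial : HasDerivAt (fun w => G (a, w) - w)
      ((fderiv ℂ (fun p => G p - p.2) (a, L) ∘L .inr ℂ ℂ ℂ) 1) L :=
    (hΦ.differentiableAt one_ne_zero).hasFDerivAt.comp_hasDerivAt L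
      ((hasDerivAt_const L a).prodMk (hasDerivAt_id L))
  refine exists_differentiableOn_eqOn_of_implicit hDo hDc hω hcluster hΦ
    (isInvertible_of_apply_one_ne_zero fun hzero => hderiv ?_)
    (hfix.mono fun p hp => sub_eq_zero.2 hp)
  rw [hzero] at hpartial
  simpa using! (hpartial.fun_add (hasDerivAt_id' L)).deriv

/-- The map `w ↦ F w - w + z`; for `z = a` it is the map `u` attached to `F` in the theorem. The
base point `z` is a variable because `ω z` is a fixed point of the composition of the maps of `F₁`
and `F₂` at `z`. -/
def shiftedDisplacement (F : ℂ → ℂ) (z w : ℂ) : ℂ := F w - w + z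

section ShiftedDisplacement

variable {F F₁ F₂ ω : ℂ → ℂ} {z w : ℂ}

lemma differentiableOn_shiftedDisplacement (hd : DifferentiableOn ℂ F UHP) (z : ℂ) :
    DifferentiableOn ℂ (shiftedDisplacement F z) UHP :=
  (hd.sub differentiableOn_id).add_const z

lemma im_shiftedDisplacement_ofReal (F : ℂ → ℂ) (a : ℝ) (w : ℂ) :
    (shiftedDisplacement F a w).im = (F w).im - w.im := by
  simp [shiftedDisplacement]

lemma contDiffAt_shiftedDisplacement (hd : DifferentiableOn ℂ F UHP) (hw : w ∈ UHP) :
    ContDiffAt ℂ 1 (fun p : ℂ × ℂ => shiftedDisplacement F p.1 p.2) (z, w) :=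
  have hF : ContDiffAt ℂ 1 F w := (hd.analyticAt (isOpen_UHP.mem_nhds hw)).contDiffAt
  ((hF.comp (z, w) contDiffAt_snd).sub contDiffAt_snd).add contDiffAt_fst

lemma contDiffAt_shiftedDisplacement_comp (hd₁ : DifferentiableOn ℂ F₁ UHP)
    (hd₂ : DifferentiableOn ℂ F₂ UHP) (hw : w ∈ UHP) (hu : shiftedDisplacement F₁ z w ∈ UHP) :
    ContDiffAt ℂ 1 (fun p : ℂ × ℂ =>
      shiftedDisplacement F₂ p.1 (shiftedDisplacement F₁ p.1 p.2)) (z, w) :=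
  ContDiffAt.comp (g := fun p : ℂ × ℂ => shiftedDisplacement F₂ p.1 p.2) (z, w)
    (contDiffAt_shiftedDisplacement hd₂ hu)
    (contDiffAt_fst.prodMk (contDiffAt_shiftedDisplacement hd₁ hw))

lemma shiftedDisplacement_comp_eq_self_iff :
    shiftedDisplacement F₂ z (shiftedDisplacement F₁ z w) = w ↔
      F₂ (F₁ w - w + z) - (F₁ w - w) = w := by
  simp only [shiftedDisplacement, sub_add_eq_sub_sub, sub_add_cancel]

lemma mapsTo_shiftedDisplacement {a : ℝ} (him : ∀ w ∈ UHP, w.im < (F w).im) :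
    MapsTo (shiftedDisplacement F a) UHP UHP := fun w hw => by
  simpa [mem_UHP, im_shiftedDisplacement_ofReal] using him w hw

lemma mapsTo_shiftedDisplacement_of_mem {a : ℝ} {w₀ : ℂ} (hd : DifferentiableOn ℂ F UHP)
    (him : ∀ w ∈ UHP, w.im ≤ (F w).im) (hw₀ : w₀ ∈ UHP)
    (hmem : shiftedDisplacement F a w₀ ∈ UHP) : MapsTo (shiftedDisplacement F a) UHP UHP :=
  mapsTo_UHP_of_im_nonneg (differentiableOn_shiftedDisplacement hd a) isOpen_UHP
    convex_UHP.isPreconnected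
    (fun w hw => by simpa [im_shiftedDisplacement_ofReal] using him w hw) hw₀ hmem

lemma deriv_shiftedDisplacement_comp_ne_one {a : ℝ} {L : ℂ} (hd₁ : DifferentiableOn ℂ F₁ UHP)
    (him₁ : ∀ w ∈ UHP, w.im < (F₁ w).im) (hd₂ : DifferentiableOn ℂ F₂ UHP)
    (him₂ : ∀ w ∈ UHP, w.im ≤ (F₂ w).im)
    (hne : ¬ EqOn (shiftedDisplacement F₂ a ∘ shiftedDisplacement F₁ a) id UHP) (hL : L ∈ UHP)
    (hfix : shiftedDisplacement F₂ a (shiftedDisplacement F₁ a L) = L) :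
    deriv (shiftedDisplacement F₂ a ∘ shiftedDisplacement F₁ a) L ≠ 1 := by
  have hu₁ : MapsTo (shiftedDisplacement F₁ a) UHP UHP := mapsTo_shiftedDisplacement him₁
  have hu₂ : MapsTo (shiftedDisplacement F₂ a) UHP UHP :=
    mapsTo_shiftedDisplacement_of_mem hd₂ him₂ (hu₁ hL) (hfix.symm ▸ hL)
  have hd := (differentiableOn_shiftedDisplacement hd₂ a).comp
    (differentiableOn_shiftedDisplacement hd₁ a) hu₁
  exact fun hderiv => hne (eqOn_id_of_deriv_eq_one hd (hu₂.comp hu₁) hL hfix hderiv)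

end ShiftedDisplacement

theorem boundary_plus_part1_general {F₁ F₂ ω : ℂ → ℂ} (hd₁ : DifferentiableOn ℂ F₁ UHP)
    (him₁ : ∀ w ∈ UHP, w.im < (F₁ w).im) (hd₂ : DifferentiableOn ℂ F₂ UHP)
    (him₂ : ∀ w ∈ UHP, w.im ≤ (F₂ w).im) (hω : DifferentiableOn ℂ ω UHP)
    (hωeq : ∀ z ∈ UHP, ω z ∈ UHP → F₂ (F₁ (ω z) - ω z + z) - (F₁ (ω z) - ω z) = ω z)
    {a : ℝ}
    (hne : ¬ EqOn (fun w => F₂ (F₁ w - w + a) - (F₁ w - w + a) + a) id UHP)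
    (hcluster : ∃ L ∈ UHP, ((a : ℂ), L) ∈ closure (UHP.graphOn ω)) :
    ∃ (U : Set ℂ) (g : ℂ → ℂ), IsOpen U ∧ (a : ℂ) ∈ U ∧ DifferentiableOn ℂ g U ∧
      EqOn ω g (U ∩ UHP) := by
  obtain ⟨L, hL, hcluster⟩ := hcluster
  have hG := contDiffAt_shiftedDisplacement_comp hd₁ hd₂ hL
    (mapsTo_shiftedDisplacement (a := a) him₁ hL)
  have hfix_near : ∀ᶠ p in 𝓝[UHP.graphOn ω] ((a : ℂ), L),
      shiftedDisplacement F₂ p.1 (shiftedDisplacement F₁ p.1 p.2) = p.2 := by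
    filter_upwards [self_mem_nhdsWithin,
      nhdsWithin_le_nhds (continuous_snd.continuousAt (isOpen_UHP.mem_nhds hL))]
    rintro _ ⟨z, hz, rfl⟩ hωz
    exact shiftedDisplacement_comp_eq_self_iff.2 (hωeq z hz hωz)
  have := mem_closure_iff_nhdsWithin_neBot.1 hcluster
  have hfix : shiftedDisplacement F₂ a (shiftedDisplacement F₁ a L) = L :=
    tendsto_nhds_unique_of_eventuallyEq (hG.continuousAt.mono_left nhdsWithin_le_nhds)
      (continuousAt_snd.mono_left nhdsWithin_le_nhds) hfix_near
  exact exists_differentiableOn_eqOn_of_fixedPoint isOpen_UHP convex_UHP hω hcluster hG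
    (deriv_shiftedDisplacement_comp_ne_one hd₁ him₁ hd₂ him₂ hne hL hfix) hfix_near

/-- Boundary behaviour of the subordination function: with `F₁, F₂` as in the
subordination theorem and `ω` the unique analytic self-map of `ℂ⁺` satisfying
`F₂(F₁(ω(z)) − ω(z) + z) − (F₁(ω(z)) − ω(z)) = ω(z)`, fix `a ∈ ℝ` and assume
`u₂ ∘ u₁` (where `u_j(w) = F_j(w) − w + a`) is not a conformal automorphism of
`ℂ⁺`.  If the cluster set `C(ω,a)` meets `ℂ⁺`, then `ω` extends analytically to
a neighbourhood of `a`. -/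
theorem boundary_plus_part1
    (F₁ F₂ : ℂ → ℂ)
    (hd₁ : DifferentiableOn ℂ F₁ UHP) (hm₁ : Set.MapsTo F₁ UHP UHP)
    (hd₂ : DifferentiableOn ℂ F₂ UHP) (hm₂ : Set.MapsTo F₂ UHP UHP)
    (hna₁ : ¬ Set.BijOn F₁ UHP UHP) (hna₂ : ¬ Set.BijOn F₂ UHP UHP)
    (hl₁ : Tendsto (fun y : ℝ => F₁ (Complex.I * y) / (Complex.I * y)) atTop (𝓝 1))
    (hl₂ : Tendsto (fun y : ℝ => F₂ (Complex.I * y) / (Complex.I * y)) atTop (𝓝 1))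
    (ω : ℂ → ℂ)
    (hωd : DifferentiableOn ℂ ω UHP) (hωm : Set.MapsTo ω UHP UHP)
    (hωeq : ∀ z ∈ UHP, F₂ (F₁ (ω z) - ω z + z) - (F₁ (ω z) - ω z) = ω z)
    (a : ℝ)
    (hnotaut : ¬ Set.BijOn
      (fun w => F₂ (F₁ w - w + (a : ℂ)) - (F₁ w - w + (a : ℂ)) + (a : ℂ)) UHP UHP)
    (hcluster : ∃ (L : ℂ) (z : ℕ → ℂ), L ∈ UHP ∧ (∀ n, z n ∈ UHP) ∧
      Tendsto z atTop (𝓝 (a : ℂ)) ∧ Tendsto (fun n => ω (z n)) atTop (𝓝 L)) :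
    ∃ (U : Set ℂ) (g : ℂ → ℂ), IsOpen U ∧ (a : ℂ) ∈ U ∧
      DifferentiableOn ℂ g U ∧ Set.EqOn ω g (U ∩ UHP) := by
  obtain ⟨L, z, hL, hz, hza, hzL⟩ := hcluster
  have him₁ := fun w (hw : w ∈ UHP) => im_le_im_of_tendsto_div hd₁ hm₁ hl₁ hw
  have him₂ := fun w (hw : w ∈ UHP) => im_le_im_of_tendsto_div hd₂ hm₂ hl₂ hw
  have hgraph : ((a : ℂ), L) ∈ closure (UHP.graphOn ω) := mem_closure_of_tendsto
    (hza.prodMk_nhds hzL) (.of_forall fun n => mem_image_of_mem _ (hz n))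
  exact boundary_plus_part1_general hd₁ (fun w => im_lt_im_of_not_bijOn hd₁ him₁ hna₁) hd₂ him₂ hωd
    (fun z hz _ => hωeq z hz) (fun hid => hnotaut ((bijOn_id UHP).congr hid.symm)) ⟨L, hL, hgraph⟩
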